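/- Let 0 < α < 1 and 0 < β < 1 and let n be a natural number. Then the 2×2 real matrix [[c₁(n), 1], [1, c₄(n)]], where c₁(n) = −Γ(α+1)Γ(−β)/(Γ(α−n)Γ(n−β+1)) and c₄(n) = β·Γ(1−α)Γ(β)/(α·Γ(n−α+1)Γ(β−n)), has rank exactly 1. (This is the rank-one property of the matrix-valued point masses μ{λₙ} established in Theorem 4.3, expressing that each eigenvalue of the unperturbed operator A₀ has multiplicity one.) -/

import Mathlib

/-! The matrix `!![c₁, 1; 1, c₄]` is nonzero, so it has rank one as soon as `c₁ * c₄ = 1`, since it is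
then the outer product of `(c₁, 1)` and `(1, c₄)`. Using `Γ(α + 1) = α Γ(α)` and
`Γ(1 - β) = -β Γ(-β)`, the product `c₁ * c₄` becomes
`Γ(α)Γ(1 - α) · Γ(β)Γ(1 - β)` divided by `Γ(α - n)Γ(1 - (α - n)) · Γ(β - n)Γ(1 - (β - n))`.
By the reflection formula each factor of the denominator is `(-1)^n` times the corresponding factor
of the numerator, and the two signs cancel. -/

lemma Gamma_reflection_sub_nat (x : ℝ) (n : ℕ) :
    Real.Gamma (x - n) * Real.Gamma (n - x + 1) =
      (-1) ^ n * (Real.Gamma x * Real.Gamma (1 - x)) := by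
  have h : (n : ℝ) - x + 1 = 1 - (x - n) := by ring
  have hs : Real.pi * (x - n) = Real.pi * x - n * Real.pi := by ring
  rw [h, Real.Gamma_mul_Gamma_one_sub, Real.Gamma_mul_Gamma_one_sub, hs, Real.sin_sub_nat_mul_pi]
  rcases neg_one_pow_eq_or ℝ n with h1 | h1 <;> simp [h1, div_neg]

lemma rank_eq_one_of_mul_eq_one (a d : ℝ) (h : a * d = 1) :
    (!![a, 1; 1, d] : Matrix (Fin 2) (Fin 2) ℝ).rank = 1 := by
  apply le_antisymm
  · have hM : (!![a, 1; 1, d] : Matrix (Fin 2) (Fin 2) ℝ) =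
        Matrix.vecMulVec ![a, 1] ![1, d] := by
      ext i j
      fin_cases i <;> fin_cases j <;> simp [Matrix.vecMulVec_apply, h]
    rw [hM]
    exact Matrix.rank_vecMulVec_le _ _
  · rw [Nat.one_le_iff_ne_zero]
    intro h0
    rw [Matrix.rank, Submodule.finrank_eq_zero, LinearMap.range_eq_bot] at h0
    have h1 := congrFun (LinearMap.congr_fun h0 ![0, 1]) 0
    simp [Matrix.mulVec, dotProduct] at h1

theorem point_mass_matrix_rank_one (α β : ℝ) (hα0 : 0 < α) (hα1 : α < 1)
    (hβ0 : 0 < β) (hβ1 : β < 1) (n : ℕ)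
    (c₁ c₄ : ℝ)
    (hc₁ : c₁ = -Real.Gamma (α + 1) * Real.Gamma (-β) /
        (Real.Gamma (α - n) * Real.Gamma (n - β + 1)))
    (hc₄ : c₄ = β * Real.Gamma (1 - α) * Real.Gamma β /
        (α * Real.Gamma (n - α + 1) * Real.Gamma (β - n))) :
    (!![c₁, 1; 1, c₄] : Matrix (Fin 2) (Fin 2) ℝ).rank = 1 := by
  apply rank_eq_one_of_mul_eq_one
  have hA := Gamma_reflection_sub_nat α n
  have hB := Gamma_reflection_sub_nat β n
  have hα := Real.Gamma_add_one hα0.ne'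
  have hβ : Real.Gamma (1 - β) = -β * Real.Gamma (-β) := by
    rw [← Real.Gamma_add_one (neg_ne_zero.mpr hβ0.ne')]
    congr 1
    ring
  have a1 : Real.Gamma α ≠ 0 := (Real.Gamma_pos_of_pos hα0).ne'
  have a2 : Real.Gamma (1 - α) ≠ 0 := (Real.Gamma_pos_of_pos (by linarith)).ne'
  have b1 : Real.Gamma β ≠ 0 := (Real.Gamma_pos_of_pos hβ0).ne'
  have b2 : Real.Gamma (1 - β) ≠ 0 := (Real.Gamma_pos_of_pos (by linarith)).ne'
  have hsq : ((-1 : ℝ) ^ n) * (-1) ^ n = 1 := by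
    rw [← mul_pow]
    norm_num
  have hD : (Real.Gamma (α - n) * Real.Gamma (n - α + 1)) *
      (Real.Gamma (β - n) * Real.Gamma (n - β + 1)) =
      (Real.Gamma α * Real.Gamma (1 - α)) * (Real.Gamma β * Real.Gamma (1 - β)) := by
    rw [hA, hB]
    linear_combination
      (Real.Gamma α * Real.Gamma (1 - α)) * (Real.Gamma β * Real.Gamma (1 - β)) * hsq
  have hD0 : (Real.Gamma α * Real.Gamma (1 - α)) * (Real.Gamma β * Real.Gamma (1 - β)) ≠ 0 := by
    positivity
  rw [hc₁, hc₄, hα, div_mul_div_comm, div_eq_one_iff_eq]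
  · rw [hβ] at hD
    linear_combination -α * hD
  · have hE : Real.Gamma (α - n) * Real.Gamma (n - β + 1) *
        (α * Real.Gamma (n - α + 1) * Real.Gamma (β - n)) =
        α * ((Real.Gamma α * Real.Gamma (1 - α)) * (Real.Gamma β * Real.Gamma (1 - β))) := by
      linear_combination α * hD
    rw [hE]
    exact mul_ne_zero hα0.ne' hD0
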